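/- arXiv:0803.3373 — 5 statements merged into one kernel-verified Lean document; each statement's English description precedes it below -/
import Mathlib

section
/- Let k be a field and let X₀, X₁, X₂, … be integral, separated schemes of finite type over k (varieties over k). Suppose given morphisms f_i : X_i → X_{i−1} (for i ≥ 1) over k which are proper and surjective, and a variety Y over k together with surjective morphisms g_i : Y → X_i (for i ≥ 0) over k such that f_i ∘ g_i = g_{i−1} for every i ≥ 1. Then there exists i₀ such that for every i ≥ i₀ the morphism f_i is an isomorphism. -/
open AlgebraicGeometry CategoryTheory

/-! The kernel pairs `Y ×[X i] Y` form a descending chain of closed subschemes of the Noetherian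
scheme `Y ×[X 0] Y`, so their underlying sets stabilize. Once they do, the surjectivity of `Y ⟶ X i`
makes `f i` universally injective, hence quasi-finite, and being proper it is finite.

Now let all `f i` be finite, and let `L` be a finite extension of the function field `K` of `X 0`
over which `Y` has a point above the generic point of `X 0`. Over an affine open with coordinate
ring `A`, the coordinate rings of the `X i` are domains integral over `A`, and evaluation at the
`L`-point embeds them as an increasing chain of `A`-submodules of the integral closure of `A` in
`L`. As `A` is a finitely generated `k`-algebra, that integral closure is a finite `A`-module, and
the chain stabilizes.

Noether normalization reduces this finiteness to `A = k[x₁, …, xₙ]`. When `L` is inseparable over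
`k(x₁, …, xₙ)`, a power of Frobenius reduces it further to the separable case: for `e` large, the
`p ^ e`-th power map sends `L` into a finite separable extension of `E(x₁, …, xₙ)`, where `E` is a
subfield of `k` finite over `k ^ (p ^ e)`.
-/

section FrobeniusDescent

theorem finite_integralClosure_of_ringHom {P P' L L' : Type*} [CommRing P] [IsNoetherianRing P]
    [CommRing P'] [CommRing L] [CommRing L'] [Algebra P L] [Algebra P' L']
    [Module.Finite P' (integralClosure P' L')] {σ : P →+* P'} (hσ : σ.Finite) {φ : L →+* L'}
    (hφ : Function.Injective φ) (hσφ : (algebraMap P' L').comp σ = φ.comp (algebraMap P L)) :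
    Module.Finite P (integralClosure P L) := by
  algebraize [σ, (algebraMap P' L').comp σ]
  have : Module.Finite P (integralClosure P' L') := .trans P' _
  have : IsNoetherian P (integralClosure P' L') := isNoetherian_of_isNoetherianRing_of_finite P _
  let φP : L →ₐ[P] L' := { φ with commutes' := fun x => (RingHom.congr_fun hσφ x).symm }
  let θ : integralClosure P L →ₗ[P] integralClosure P' L' :=
    (φP.toLinearMap.comp (integralClosure P L).val.toLinearMap).codRestrict
      ((integralClosure P' L').toSubmodule.restrictScalars P)
      fun x => x.2.map_of_comp_eq σ φ hσφ
  have : IsNoetherian P (integralClosure P L) :=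
    isNoetherian_of_injective θ fun x y hxy => Subtype.ext (hφ (congrArg Subtype.val hxy))
  infer_instance

variable {k : Type*} [Field k] (p : ℕ) [ExpChar k p] (e : ℕ)

theorem exists_subfield_finite_frobenius {C : Set k} (hC : C.Finite) :
    ∃ E : Subfield k, C ⊆ E ∧
      ∃ j : k →+* E, j.Finite ∧ E.subtype.comp j = iterateFrobenius k p e := by
  let F : Subfield k := (iterateFrobenius k p e).fieldRange
  let E : IntermediateField F k := IntermediateField.adjoin F C
  have : Finite C := hC
  have : FiniteDimensional F E := IntermediateField.finiteDimensional_adjoin fun x _ =>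
    .of_pow (expChar_pow_pos k p e)
      (isIntegral_algebraMap (R := F) (x := ⟨x ^ p ^ e, x, iterateFrobenius_def p e x⟩))
  refine ⟨E.toSubfield, IntermediateField.subset_adjoin F C,
    (algebraMap F E : F →+* E).comp (iterateFrobenius k p e).rangeRestrictField, ?_, rfl⟩
  exact (RingHom.finite_algebraMap.mpr ‹FiniteDimensional F E›).comp
    (.of_surjective _ (iterateFrobenius k p e).rangeRestrictField_bijective.surjective)

theorem exists_finite_map_comp_eq_iterateFrobenius (ι : Type*) [Finite ι] {E : Subfield k}
    {j : k →+* E} (hj : j.Finite) (hjE : E.subtype.comp j = iterateFrobenius k p e)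
    [ExpChar (MvPolynomial ι k) p] :
    ∃ ψ : MvPolynomial ι k →+* MvPolynomial ι E, ψ.Finite ∧
      (MvPolynomial.map E.subtype).comp ψ = iterateFrobenius (MvPolynomial ι k) p e := by
  let ψ : MvPolynomial ι k →+* MvPolynomial ι E :=
    MvPolynomial.eval₂Hom (MvPolynomial.C.comp j) fun i => MvPolynomial.X i ^ p ^ e
  have hψ : (MvPolynomial.map E.subtype).comp ψ = iterateFrobenius (MvPolynomial ι k) p e := by
    refine MvPolynomial.ringHom_ext (fun c => ?_) fun i => ?_
    · have hc : (j c : k) = c ^ p ^ e := RingHom.congr_fun hjE c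
      simp [ψ, iterateFrobenius_def, hc]
    · simp [ψ, iterateFrobenius_def]
  refine ⟨ψ, RingHom.IsIntegral.to_finite (fun x => ?_) ?_, hψ⟩
  · have hx : ψ (MvPolynomial.map E.subtype x) = x ^ p ^ e := by
      apply MvPolynomial.map_injective _ E.subtype_injective
      rw [map_pow]
      exact RingHom.congr_fun hψ _
    algebraize [ψ]
    exact IsIntegral.of_pow (expChar_pow_pos k p e) (hx ▸ isIntegral_algebraMap)
  · have hC : ψ.comp MvPolynomial.C = MvPolynomial.C.comp j := by ext; simp [ψ]
    have hCfin : (MvPolynomial.C : E →+* MvPolynomial ι E).FiniteType :=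
      RingHom.finiteType_algebraMap.mpr inferInstance
    exact .of_comp_finiteType (hC ▸ hCfin.comp hj.finiteType)

theorem exists_finite_coeffs_of_finite {ι K : Type*} [Field K] [Algebra (MvPolynomial ι k) K]
    [IsFractionRing (MvPolynomial ι k) K] {T : Set K} (hT : T.Finite) :
    ∃ C : Set k, C.Finite ∧ ∀ E : Subfield k, C ⊆ E → ∀ t ∈ T, ∃ a b : MvPolynomial ι E,
      t = algebraMap _ K (a.map E.subtype) / algebraMap _ K (b.map E.subtype) := by
  classical
  choose a b _ hab using fun t : K => IsFractionRing.div_surjective (A := MvPolynomial ι k) t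
  refine ⟨⋃ t ∈ T, ((a t).coeffs ∪ (b t).coeffs : Finset k),
    hT.biUnion fun t _ => Finset.finite_toSet _, fun E hE t ht => ?_⟩
  have hlift (c : MvPolynomial ι k) (hc : c.coeffs ⊆ (a t).coeffs ∪ (b t).coeffs) :
      ∃ c' : MvPolynomial ι E, c'.map E.subtype = c := by
    refine MvPolynomial.mem_range_map_iff_coeffs_subset.mpr fun x hx => ?_
    exact ⟨⟨x, hE (Set.mem_biUnion ht (hc hx))⟩, rfl⟩
  obtain ⟨a', ha'⟩ := hlift (a t) Finset.subset_union_left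
  obtain ⟨b', hb'⟩ := hlift (b t) Finset.subset_union_right
  exact ⟨a', b', by rw [ha', hb', hab]⟩

theorem isSeparable_of_minpoly_mem_lifts {K' K L : Type*} [Field K'] [Field K] [Field L]
    [Algebra K' K] [Algebra K L] [Algebra K' L] [IsScalarTower K' K L] {x : L}
    (hx : IsSeparable K x) (hcoeff : minpoly K x ∈ Polynomial.lifts (algebraMap K' K)) :
    IsSeparable K' x := by
  obtain ⟨m, hm⟩ := (Polynomial.mem_lifts _).mp hcoeff
  have hmsep : m.Separable := by
    rw [← Polynomial.separable_map (algebraMap K' K), hm]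
    exact hx
  refine hmsep.of_dvd (minpoly.dvd _ _ ?_)
  rw [← Polynomial.aeval_map_algebraMap K, hm, minpoly.aeval]

theorem exists_intermediateField_iterateFrobenius_mem (K' : Type*) {K L : Type*} [Field K']
    [Field K] [Field L] [Algebra K' K] [Algebra K L] [Algebra K' L] [IsScalarTower K' K L]
    (p e : ℕ) [ExpChar L p] {s : Set L} (hs : s.Finite) (hsK : IntermediateField.adjoin K s = ⊤)
    (hK : ∀ x : K, x ^ p ^ e ∈ (algebraMap K' K).range)
    (hsep : ∀ a ∈ s, IsSeparable K' (a ^ p ^ e)) :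
    ∃ L' : IntermediateField K' L, FiniteDimensional K' L' ∧ Algebra.IsSeparable K' L' ∧
      ∀ x, iterateFrobenius L p e x ∈ L' := by
  let φ := iterateFrobenius L p e
  let L' := IntermediateField.adjoin K' (φ '' s)
  have : Finite (φ '' s) := hs.image φ
  have hφs : ∀ x ∈ φ '' s, IsSeparable K' x := Set.forall_mem_image.mpr hsep
  refine ⟨L', IntermediateField.finiteDimensional_adjoin fun x hx => (hφs x hx).isIntegral,
    (IntermediateField.isSeparable_adjoin_iff_isSeparable ..).mpr hφs, fun x => ?_⟩
  have hx : x ∈ IntermediateField.adjoin K s := hsK ▸ IntermediateField.mem_top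
  induction hx using IntermediateField.adjoin_induction with
  | mem x hx => exact IntermediateField.subset_adjoin _ _ ⟨x, hx, rfl⟩
  | algebraMap x =>
    obtain ⟨y, hy⟩ := hK x
    have : iterateFrobenius L p e (algebraMap K L x) = algebraMap K' L y := by
      rw [iterateFrobenius_def, ← map_pow, ← hy, ← IsScalarTower.algebraMap_apply]
    exact this ▸ L'.algebraMap_mem y
  | add x y _ _ hx hy => exact map_add (iterateFrobenius L p e) x y ▸ add_mem hx hy
  | inv x _ hx => exact map_inv₀ (iterateFrobenius L p e) x ▸ inv_mem hx
  | mul x y _ _ hx hy => exact map_mul (iterateFrobenius L p e) x y ▸ mul_mem hx hy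

theorem exists_forall_isSeparable_pow (K L : Type*) [Field K] [Field L] [Algebra K L]
    [FiniteDimensional K L] (p : ℕ) [ExpChar L p] :
    ∃ e : ℕ, ∀ a : L, IsSeparable K (a ^ p ^ e) := by
  obtain ⟨e, he⟩ :=
    (IsPurelyInseparable.hasExponent_iff' (separableClosure K L) L p).mp inferInstance
  refine ⟨e, fun a => ?_⟩
  obtain ⟨x, hx⟩ := he a
  exact hx ▸ mem_separableClosure_iff.mp x.2

theorem finite_integralClosure_of_iterateFrobenius {P P' K' K L : Type*} [CommRing P]
    [IsNoetherianRing P] [CommRing P'] [IsDomain P'] [IsNoetherianRing P'] [IsIntegrallyClosed P']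
    [Field K'] [Field K] [Field L] [Algebra P' K'] [IsFractionRing P' K'] [Algebra P K]
    [IsFractionRing P K] [Algebra P L] [Algebra K L] [IsScalarTower P K L] (p e : ℕ) [ExpChar L p]
    {ψ : P →+* P'} (hψ : ψ.Finite) {θ : K' →+* K}
    (hθ : ∀ x, θ (algebraMap P' K' (ψ x)) = algebraMap P K x ^ p ^ e)
    {s : Set L} (hs : s.Finite) (hsK : IntermediateField.adjoin K s = ⊤)
    (hsep : ∀ a ∈ s, IsSeparable K (a ^ p ^ e))
    (hcoeff : ∀ a ∈ s, minpoly K (a ^ p ^ e) ∈ Polynomial.lifts θ) :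
    Module.Finite P (integralClosure P L) := by
  algebraize [θ, (algebraMap K L).comp θ]
  have hK (x : K) : x ^ p ^ e ∈ (algebraMap K' K).range := by
    obtain ⟨a, b, _, rfl⟩ := IsFractionRing.div_surjective (A := P) x
    exact ⟨algebraMap P' K' (ψ a) / algebraMap P' K' (ψ b), by
      rw [map_div₀, div_pow, ← hθ, ← hθ]; rfl⟩
  obtain ⟨L', _, _, hL'⟩ := exists_intermediateField_iterateFrobenius_mem K' p e hs hsK hK
    fun a ha => isSeparable_of_minpoly_mem_lifts (hsep a ha) (hcoeff a ha)
  let : Algebra P' L' := ((algebraMap K' L').comp (algebraMap P' K')).toAlgebra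
  have : IsScalarTower P' K' L' := .of_algebraMap_eq' rfl
  have : Module.Finite P' (integralClosure P' L') := IsIntegralClosure.finite P' K' L' _
  refine finite_integralClosure_of_ringHom hψ
    (φ := (iterateFrobenius L p e).codRestrict L'.toSubfield hL')
    (RingHom.injective _) (RingHom.ext fun x => Subtype.ext ?_)
  calc algebraMap K L (θ (algebraMap P' K' (ψ x)))
    _ = algebraMap K L (algebraMap P K x) ^ p ^ e := by rw [hθ, map_pow]
    _ = iterateFrobenius L p e (algebraMap P L x) := by
      rw [iterateFrobenius_def, ← IsScalarTower.algebraMap_apply]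

theorem exists_frobenius_descent (ι : Type*) [Finite ι] {K : Type*} [Field K]
    [Algebra (MvPolynomial ι k) K] [IsFractionRing (MvPolynomial ι k) K]
    {T : Set K} (hT : T.Finite) :
    ∃ (E : Subfield k) (ψ : MvPolynomial ι k →+* MvPolynomial ι E)
      (θ : FractionRing (MvPolynomial ι E) →+* K), ψ.Finite ∧
        (∀ x, θ (algebraMap _ _ (ψ x)) = algebraMap (MvPolynomial ι k) K x ^ p ^ e) ∧
        T ⊆ θ.range := by
  obtain ⟨C, hC, hCT⟩ := exists_finite_coeffs_of_finite (k := k) (ι := ι) hT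
  obtain ⟨E, hCE, j, hj, hjE⟩ := exists_subfield_finite_frobenius p e hC
  have : ExpChar (MvPolynomial ι k) p :=
    expChar_of_injective_algebraMap (R := k) (MvPolynomial.C_injective _ _) p
  obtain ⟨ψ, hψ, hψE⟩ := exists_finite_map_comp_eq_iterateFrobenius p e ι hj hjE
  let θ : FractionRing (MvPolynomial ι E) →+* K :=
    IsFractionRing.map (MvPolynomial.map_injective (σ := ι) _ E.subtype_injective)
  have hθ (x) : θ (algebraMap (MvPolynomial ι E) _ x) = algebraMap _ K (x.map E.subtype) :=
    IsLocalization.map_eq _ x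
  refine ⟨E, ψ, θ, hψ, fun x => ?_, fun t ht => ?_⟩
  · rw [hθ, ← map_pow]
    exact congrArg _ (RingHom.congr_fun hψE x)
  · obtain ⟨a, b, rfl⟩ := hCT E hCE t ht
    exact ⟨algebraMap _ _ a / algebraMap _ _ b, by rw [map_div₀, hθ, hθ]⟩

theorem finite_integralClosure_mvPolynomial (k ι : Type*) [Field k] [Finite ι]
    (K L : Type*) [Field K] [Field L] [Algebra (MvPolynomial ι k) K]
    [IsFractionRing (MvPolynomial ι k) K] [Algebra (MvPolynomial ι k) L] [Algebra K L]
    [IsScalarTower (MvPolynomial ι k) K L] [FiniteDimensional K L] :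
    Module.Finite (MvPolynomial ι k) (integralClosure (MvPolynomial ι k) L) := by
  obtain ⟨p, _⟩ := ExpChar.exists k
  have hkL : Function.Injective
      ((algebraMap K L).comp ((algebraMap (MvPolynomial ι k) K).comp MvPolynomial.C)) :=
    RingHom.injective _
  have : ExpChar L p := expChar_of_injective_ringHom hkL p
  obtain ⟨e, hsep⟩ := exists_forall_isSeparable_pow K L p
  obtain ⟨s, hs⟩ : (⊤ : IntermediateField K L).FG := IntermediateField.fg_top_iff.mpr inferInstance
  let coeffs : Set K := ⋃ a ∈ s, (minpoly K (a ^ p ^ e)).coeffs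
  have hcoeffs : coeffs.Finite := s.finite_toSet.biUnion fun a _ => Finset.finite_toSet _
  obtain ⟨E, ψ, θ, hψ, hθ, hcoeffsθ⟩ := exists_frobenius_descent (k := k) p e ι hcoeffs
  refine finite_integralClosure_of_iterateFrobenius p e hψ hθ s.finite_toSet hs
    (fun a _ => hsep a) fun a ha => (Polynomial.lifts_iff_coeff_lifts _).mpr fun n => ?_
  by_cases hn : (minpoly K (a ^ p ^ e)).coeff n = 0
  · exact ⟨0, by rw [hn, map_zero]⟩
  · exact hcoeffsθ (Set.mem_biUnion ha (Polynomial.coeff_mem_coeffs hn))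

end FrobeniusDescent

theorem finite_integralClosure_of_isIntegral (P A L : Type*) [CommRing P] [CommRing A]
    [CommRing L] [Algebra P A] [Algebra.IsIntegral P A] [Algebra A L] [Algebra P L]
    [IsScalarTower P A L] [Module.Finite P (integralClosure P L)] :
    Module.Finite A (integralClosure A L) := by
  have hPA : integralClosure P L ≤ (integralClosure A L).restrictScalars P :=
    fun x hx => hx.tower_top
  have : Module.Finite P (integralClosure A L) :=
    .of_surjective (Subalgebra.inclusion hPA).toLinearMap fun x =>
      ⟨⟨x, isIntegral_trans _ x.2⟩, rfl⟩
  exact .of_restrictScalars_finite P A _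

theorem finite_integralClosure_of_finiteType (k A K L : Type*) [Field k] [CommRing A] [IsDomain A]
    [Algebra k A] [Algebra.FiniteType k A] [Field K] [Algebra A K] [IsFractionRing A K] [Field L]
    [Algebra A L] [Algebra K L] [IsScalarTower A K L] [FiniteDimensional K L] :
    Module.Finite A (integralClosure A L) := by
  obtain ⟨n, g, hg, hgfin⟩ := exists_finite_inj_algHom_of_fg k A
  let P := MvPolynomial (Fin n) k
  algebraize [g.toRingHom, (algebraMap A K).comp g.toRingHom, (algebraMap A L).comp g.toRingHom]
  have : Module.Finite P A := hgfin
  have : FaithfulSMul P A := (faithfulSMul_iff_algebraMap_injective P A).mpr hg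
  have : FaithfulSMul P K := .trans P A K
  have : IsScalarTower P K L :=
    .of_algebraMap_eq fun x => IsScalarTower.algebraMap_apply A K L (g x)
  let : Algebra (FractionRing P) K := FractionRing.liftAlgebra P K
  algebraize [(algebraMap K L).comp (algebraMap (FractionRing P) K)]
  have : IsScalarTower P (FractionRing P) L := .to₁₂₄ P (FractionRing P) K L
  have : FiniteDimensional (FractionRing P) K := .of_isLocalization P A (nonZeroDivisors P)
  have : FiniteDimensional (FractionRing P) L := Module.Finite.trans K L
  have := finite_integralClosure_mvPolynomial k (Fin n) (FractionRing P) L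
  exact finite_integralClosure_of_isIntegral P A L

theorem injective_of_isIntegral {A R L : Type*} [CommRing A] [CommRing R] [IsDomain R]
    [CommRing L] [Algebra A R] [Algebra.IsIntegral A R] [Algebra A L] [FaithfulSMul A L]
    (γ : R →ₐ[A] L) : Function.Injective γ := by
  have : Nontrivial A := (algebraMap A R).domain_nontrivial
  refine (RingHom.injective_iff_ker_eq_bot γ.toRingHom).mpr
    (Ideal.eq_bot_of_comap_eq_bot (R := A) ?_)
  rw [RingHom.comap_ker, ← RingHom.injective_iff_ker_eq_bot, AlgHom.toRingHom_eq_coe,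
    γ.comp_algebraMap]
  exact FaithfulSMul.algebraMap_injective A L

open Filter in
theorem eventually_bijective_of_forall_injective {A L : Type*} [CommRing A] [CommRing L]
    [Algebra A L] [IsNoetherian A (integralClosure A L)] {R : ℕ → Type*} [∀ i, CommRing (R i)]
    [∀ i, Algebra A (R i)] [∀ i, Algebra.IsIntegral A (R i)] (r : ∀ i, R i →+* R (i + 1))
    (γ : ∀ i, R i →ₐ[A] L) (hγ : ∀ i, Function.Injective (γ i))
    (hr : ∀ i x, γ (i + 1) (r i x) = γ i x) : ∀ᶠ i in atTop, Function.Bijective (r i) := by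
  let N (i : ℕ) : Submodule A (integralClosure A L) :=
    (Subalgebra.toSubmodule (γ i).range).comap (integralClosure A L).val.toLinearMap
  have hN : Monotone N := by
    refine monotone_nat_of_le_succ fun i => ?_
    rintro x ⟨y, hy⟩
    exact ⟨r i y, (hr i y).trans hy⟩
  obtain ⟨n, hn⟩ := monotone_stabilizes_iff_noetherian.mpr ‹_› ⟨N, hN⟩
  filter_upwards [eventually_ge_atTop n] with i hi
  refine ⟨.of_comp (f := γ (i + 1)) (by convert hγ i using 1; exact funext (hr i)), fun x => ?_⟩
  have hNi : N (i + 1) = N i := (hn (i + 1) (by lia)).symm.trans (hn i hi)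
  have hx : (⟨γ (i + 1) x, (Algebra.IsIntegral.isIntegral x).map (γ (i + 1))⟩ :
      integralClosure A L) ∈ N (i + 1) := ⟨x, rfl⟩
  obtain ⟨y, hy⟩ := hNi ▸ hx
  exact ⟨y, hγ (i + 1) ((hr i y).trans hy)⟩

open Filter in
theorem eventually_bijective_of_finiteType (k K : Type*) {A L : Type*} [Field k] [CommRing A]
    [IsDomain A] [Algebra k A] [Algebra.FiniteType k A] [Field K] [Algebra A K]
    [IsFractionRing A K] [Field L] [Algebra A L] [Algebra K L] [IsScalarTower A K L]
    [FiniteDimensional K L] {R : ℕ → Type*} [∀ i, CommRing (R i)] [∀ i, IsDomain (R i)]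
    [∀ i, Algebra A (R i)] [∀ i, Algebra.IsIntegral A (R i)] (r : ∀ i, R i →+* R (i + 1))
    (γ : ∀ i, R i →ₐ[A] L) (hr : ∀ i x, γ (i + 1) (r i x) = γ i x) :
    ∀ᶠ i in atTop, Function.Bijective (r i) := by
  have : IsNoetherianRing A := Algebra.FiniteType.isNoetherianRing k A
  have := finite_integralClosure_of_finiteType k A K L
  have : IsNoetherian A (integralClosure A L) := isNoetherian_of_isNoetherianRing_of_finite A _
  have : FaithfulSMul A L := .trans A K L
  exact eventually_bijective_of_forall_injective r γ (fun i => injective_of_isIntegral (γ i)) hr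

section Tower

universe u

variable {X : ℕ → Scheme.{u}} (f : ∀ i, X (i + 1) ⟶ X i)

/-- The composite `X i ⟶ X (i - 1) ⟶ ⋯ ⟶ X 0` of the transition morphisms of a tower. -/
def towerToBase : ∀ i, X i ⟶ X 0
  | 0 => 𝟙 (X 0)
  | i + 1 => f i ≫ towerToBase i

variable {f}

theorem towerToBase_mem (P : MorphismProperty Scheme.{u}) [P.IsMultiplicative]
    (hf : ∀ i, P (f i)) : ∀ i, P (towerToBase f i)
  | 0 => P.id_mem _
  | i + 1 => P.comp_mem _ _ (hf i) (towerToBase_mem P hf i)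

theorem comp_towerToBase {Y : Scheme.{u}} {g : ∀ i, Y ⟶ X i}
    (hcomm : ∀ i, g (i + 1) ≫ f i = g i) : ∀ i, g i ≫ towerToBase f i = g 0
  | 0 => Category.comp_id _
  | i + 1 => by rw [towerToBase, ← Category.assoc, hcomm, comp_towerToBase hcomm i]

end Tower

section KernelPair

open Limits

universe u

variable {Y X Z T : Scheme.{u}} {g : Y ⟶ X} {f : X ⟶ Z} {h : Y ⟶ Z}

/-- The morphism `Y ×[X] Y ⟶ Y ×[Z] Y` of kernel pairs induced by a factorization
`h = g ≫ f` through `f : X ⟶ Z`. -/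
noncomputable def kernelPairMap (w : g ≫ f = h) : pullback g g ⟶ pullback h h :=
  pullback.map g g h h (𝟙 Y) (𝟙 Y) f (by simp [w]) (by simp [w])

theorem kernelPairMap_fst (w : g ≫ f = h) :
    kernelPairMap w ≫ pullback.fst h h = pullback.fst g g :=
  (pullback.lift_fst _ _ _).trans (Category.comp_id _)

theorem kernelPairMap_snd (w : g ≫ f = h) :
    kernelPairMap w ≫ pullback.snd h h = pullback.snd g g :=
  (pullback.lift_snd _ _ _).trans (Category.comp_id _)

theorem kernelPairMap_comp {f' : Z ⟶ T} {h' : Y ⟶ T} (w : g ≫ f = h) (w' : h ≫ f' = h')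
    (w'' : g ≫ f ≫ f' = h') :
    kernelPairMap w ≫ kernelPairMap w' = kernelPairMap w'' := by
  apply pullback.hom_ext <;> simp only [Category.assoc, kernelPairMap_fst, kernelPairMap_snd]

theorem isClosedImmersion_kernelPairMap [IsSeparated f] (w : g ≫ f = h) :
    IsClosedImmersion (kernelPairMap w) := by
  subst w
  exact inferInstanceAs (IsClosedImmersion (pullback.mapDesc g g f))

theorem universallyInjective_of_surjective_kernelPairMap [Surjective g] (w : g ≫ f = h)
    [Surjective (kernelPairMap w)] : UniversallyInjective f := by
  let q : pullback h h ⟶ pullback f f :=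
    pullback.map h h f f g g (𝟙 Z) (by rw [w, Category.comp_id]) (by rw [w, Category.comp_id])
  have hq : Surjective q := by
    refine ⟨Set.range_eq_univ.mp ?_⟩
    rw [Scheme.Pullback.range_map, g.surjective.range_eq]
    simp only [Set.preimage_univ, Set.univ_inter]
  have hdiag : (pullback.fst g g ≫ g) ≫ pullback.diagonal f = kernelPairMap w ≫ q := by
    apply pullback.hom_ext
    · rw [Category.assoc, pullback.diagonal_fst, Category.comp_id, Category.assoc,
        pullback.lift_fst, ← Category.assoc, kernelPairMap_fst]
    · rw [Category.assoc, pullback.diagonal_snd, Category.comp_id, Category.assoc,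
        pullback.lift_snd, ← Category.assoc, kernelPairMap_snd, pullback.condition]
  have : Surjective ((pullback.fst g g ≫ g) ≫ pullback.diagonal f) := hdiag ▸ inferInstance
  exact (UniversallyInjective.iff_diagonal f).mpr (.of_comp (pullback.fst g g ≫ g) _)

end KernelPair

section EventuallyFinite

open Limits Filter

universe u

variable {Y : Scheme.{u}} {X : ℕ → Scheme.{u}} {f : ∀ i, X (i + 1) ⟶ X i} {g : ∀ i, Y ⟶ X i}

theorem eventually_surjective_kernelPairMap [IsNoetherian (X 0)] [∀ i, IsSeparated (f i)]
    [LocallyOfFiniteType (g 0)] [QuasiCompact (g 0)] (hcomm : ∀ i, g (i + 1) ≫ f i = g i) :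
    ∀ᶠ i in atTop, Surjective (kernelPairMap (hcomm i)) := by
  let c (i : ℕ) : pullback (g i) (g i) ⟶ pullback (g 0) (g 0) :=
    kernelPairMap (comp_towerToBase hcomm i)
  have hc (i : ℕ) : kernelPairMap (hcomm i) ≫ c i = c (i + 1) := kernelPairMap_comp ..
  have (i : ℕ) : IsSeparated (towerToBase f i) := towerToBase_mem @IsSeparated inferInstance i
  have (i : ℕ) : IsClosedImmersion (c i) := isClosedImmersion_kernelPairMap _
  have : IsLocallyNoetherian (pullback (g 0) (g 0)) :=
    LocallyOfFiniteType.isLocallyNoetherian (pullback.fst (g 0) (g 0) ≫ g 0)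
  have : CompactSpace (pullback (g 0) (g 0) : Scheme) :=
    QuasiCompact.compactSpace_of_compactSpace (pullback.fst (g 0) (g 0) ≫ g 0)
  have : IsNoetherian (pullback (g 0) (g 0)) := {}
  let R (i : ℕ) : TopologicalSpace.Closeds (pullback (g 0) (g 0) : Scheme) :=
    ⟨Set.range (c i), (c i).isClosedEmbedding.isClosed_range⟩
  have hR : Antitone R := antitone_nat_of_succ_le fun i => by
    rintro _ ⟨x, rfl⟩
    exact ⟨kernelPairMap (hcomm i) x, by rw [← hc i, Scheme.Hom.comp_apply]⟩
  obtain ⟨n, hn⟩ := WellFoundedLT.antitone_chain_condition hR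
  filter_upwards [eventually_ge_atTop n] with i hi
  have hRi : R i = R (i + 1) := (hn i hi).symm.trans (hn (i + 1) (by lia))
  refine ⟨fun x => ?_⟩
  obtain ⟨y, hy⟩ : c i x ∈ R (i + 1) := hRi ▸ ⟨x, rfl⟩
  exact ⟨y, (c i).isClosedEmbedding.injective (by rw [← hy, ← hc i, Scheme.Hom.comp_apply])⟩

theorem eventually_isFinite [IsNoetherian (X 0)] [∀ i, IsProper (f i)] [∀ i, Surjective (g i)]
    [LocallyOfFiniteType (g 0)] [QuasiCompact (g 0)] (hcomm : ∀ i, g (i + 1) ≫ f i = g i) :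
    ∀ᶠ i in atTop, IsFinite (f i) := by
  filter_upwards [eventually_surjective_kernelPairMap hcomm] with i hi
  have := universallyInjective_of_surjective_kernelPairMap (hcomm i)
  exact .of_isProper_of_locallyQuasiFinite _

end EventuallyFinite

section EventuallyIso

open Limits Filter

universe u

theorem exists_finiteDimensional_point {K : Type u} [Field K] {F : Scheme.{u}} [Nonempty F]
    (q : F ⟶ Spec (.of K)) [LocallyOfFiniteType q] :
    ∃ (L : Type u) (_ : Field L) (_ : Algebra K L) (_ : FiniteDimensional K L)
      (t : Spec (.of L) ⟶ F), t ≫ q = Spec.map (CommRingCat.ofHom (algebraMap K L)) := by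
  have : JacobsonSpace F := LocallyOfFiniteType.jacobsonSpace q
  obtain ⟨y, hy⟩ : (closedPoints F).Nonempty := by
    rw [← closure_nonempty_iff, closure_closedPoints]
    exact Set.univ_nonempty
  have := isClosed_singleton_iff_isClosedImmersion.mp hy
  have : IsFinite (F.fromSpecResidueField y ≫ q) :=
    isFinite_iff_locallyOfFiniteType_of_jacobsonSpace.mpr inferInstance
  obtain ⟨φ, hφ⟩ := Spec.map_surjective (F.fromSpecResidueField y ≫ q)
  let := φ.hom.toAlgebra
  exact ⟨F.residueField y, inferInstance, this,
    (IsFinite.SpecMap_iff φ).mp (hφ ▸ ‹_›),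
    F.fromSpecResidueField y, hφ.symm⟩

theorem exists_finiteDimensional_functionField_point {X Y : Scheme.{u}} [IsIntegral X] (g : Y ⟶ X)
    [Surjective g] [LocallyOfFiniteType g] :
    ∃ (L : Type u) (_ : Field L) (_ : Algebra X.functionField L)
      (_ : FiniteDimensional X.functionField L) (t : Spec (.of L) ⟶ Y),
      t ≫ g = Spec.map (CommRingCat.ofHom (algebraMap X.functionField L)) ≫
        X.fromSpecStalk (genericPoint X) := by
  let ξ : Spec (.of X.functionField) ⟶ X := X.fromSpecStalk (genericPoint X)
  have : Nonempty (pullback g ξ : Scheme) := (pullback.snd g ξ).surjective.nonempty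
  obtain ⟨L, _, _, _, t, ht⟩ := exists_finiteDimensional_point (pullback.snd g ξ)
  exact ⟨L, _, _, ‹_›, t ≫ pullback.fst g ξ, by
    rw [Category.assoc, pullback.condition, ← Category.assoc, ht]⟩

/-- The value at an `L`-valued point `p` of a section over an open set `V`, the hypothesis `hV`
expressing that `p` factors through `V`. -/
noncomputable def sectionEval {L : Type u} [CommRing L] {Z : Scheme.{u}} (p : Spec (.of L) ⟶ Z)
    (V : Z.Opens) (hV : ⊤ ≤ p ⁻¹ᵁ V) : Γ(Z, V) ⟶ .of L :=
  p.appLE V ⊤ hV ≫ (Scheme.ΓSpecIso _).hom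

theorem app_comp_sectionEval {L : Type u} [CommRing L] {Z W : Scheme.{u}} (p : Spec (.of L) ⟶ Z)
    (φ : Z ⟶ W) (V : W.Opens) (hV : ⊤ ≤ p ⁻¹ᵁ φ ⁻¹ᵁ V) :
    φ.app V ≫ sectionEval p (φ ⁻¹ᵁ V) hV = sectionEval (p ≫ φ) V hV := by
  rw [sectionEval, ← Category.assoc]
  exact congrArg (· ≫ _) (Scheme.Hom.comp_appLE p φ V ⊤ hV).symm

theorem top_le_preimage_of_mem {R : CommRingCat.{u}} {Z : Scheme.{u}} {z : Z}
    (φ : Z.presheaf.stalk z ⟶ R) {V : Z.Opens} (hz : z ∈ V) :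
    ⊤ ≤ (Spec.map φ ≫ Z.fromSpecStalk z) ⁻¹ᵁ V := by
  intro x _
  have hx : Z.fromSpecStalk z (Spec.map φ x) ⤳ z :=
    Scheme.range_fromSpecStalk.le (Set.mem_range_self _)
  exact hx.mem_open V.isOpen hz

theorem sectionEval_fromSpecStalk {L : Type u} [CommRing L] {Z : Scheme.{u}} {z : Z}
    (φ : Z.presheaf.stalk z ⟶ .of L) {V : Z.Opens} (hz : z ∈ V) :
    sectionEval (Spec.map φ ≫ Z.fromSpecStalk z) V (top_le_preimage_of_mem φ hz) =
      Z.presheaf.germ V z hz ≫ φ := by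
  have hres : (Spec (Z.presheaf.stalk z)).presheaf.map (homOfLE le_top).op ≫
      (Spec.map φ).appLE (Z.fromSpecStalk z ⁻¹ᵁ V) ⊤
        (top_le_preimage_of_mem φ hz) = (Spec.map φ).appTop :=
    ((Spec.map φ).map_appLE _ _).trans (Spec.map φ).app_eq_appLE.symm
  calc sectionEval (Spec.map φ ≫ Z.fromSpecStalk z) V (top_le_preimage_of_mem φ hz)
    _ = (Z.fromSpecStalk z).app V ≫ (Spec.map φ).appLE (Z.fromSpecStalk z ⁻¹ᵁ V) ⊤
        (top_le_preimage_of_mem φ hz) ≫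
        (Scheme.ΓSpecIso _).hom := by
      rw [← Category.assoc, ← Scheme.Hom.comp_appLE, sectionEval]
    _ = Z.presheaf.germ V z hz ≫ (Scheme.ΓSpecIso _).inv ≫ (Spec.map φ).appTop ≫
        (Scheme.ΓSpecIso _).hom := by
      rw [Scheme.fromSpecStalk_app hz, ← hres]
      simp only [Category.assoc]
    _ = Z.presheaf.germ V z hz ≫ φ := by
      rw [Scheme.ΓSpecIso_naturality, Iso.inv_hom_id_assoc]

theorem nonempty_of_nontrivial_sections {Z : Scheme.{u}} {V : Z.Opens} [Nontrivial Γ(Z, V)] :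
    Nonempty V := by
  refine TopologicalSpace.Opens.nonempty_coeSort.mpr (V.ne_bot_iff_nonempty.mp ?_)
  rintro rfl
  exact not_subsingleton Γ(Z, ⊥) inferInstance

theorem finiteType_sections {k : Type u} [CommRing k] {Z : Scheme.{u}} (s : Z ⟶ Spec (.of k))
    [LocallyOfFiniteType s] {U : Z.Opens} (hU : IsAffineOpen U) :
    ((Scheme.ΓSpecIso (.of k)).inv ≫ s.appLE ⊤ U le_top).hom.FiniteType :=
  (s.finiteType_appLE (isAffineOpen_top _) hU le_top).comp <| .of_surjective _
    (ConcreteCategory.bijective_of_isIso (Scheme.ΓSpecIso (.of k)).inv).surjective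

variable {Y : Scheme.{u}} {X : ℕ → Scheme.{u}} {f : ∀ i, X (i + 1) ⟶ X i} {g : ∀ i, Y ⟶ X i}

theorem exists_forall_app_comp_eq [IsIntegral (X 0)] [Surjective (g 0)]
    [LocallyOfFiniteType (g 0)] (hcomm : ∀ i, g (i + 1) ≫ f i = g i) (U : (X 0).Opens)
    [Nonempty U] :
    ∃ (L : Type u) (_ : Field L) (_ : Algebra (X 0).functionField L)
      (_ : FiniteDimensional (X 0).functionField L)
      (γ : ∀ i, Γ(X i, towerToBase f i ⁻¹ᵁ U) ⟶ .of L),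
      (∀ i, (towerToBase f i).app U ≫ γ i = (X 0).germToFunctionField U ≫
        CommRingCat.ofHom (algebraMap (X 0).functionField L)) ∧
      ∀ i, (f i).app (towerToBase f i ⁻¹ᵁ U) ≫ γ (i + 1) = γ i := by
  obtain ⟨L, _, _, _, t, ht⟩ := exists_finiteDimensional_functionField_point (g 0)
  let φ : (X 0).functionField ⟶ .of L := CommRingCat.ofHom (algebraMap (X 0).functionField L)
  have hη : genericPoint (X 0) ∈ U :=
    ((genericPoint_spec (X 0)).mem_open_set_iff U.isOpen).mpr (by simpa using ‹Nonempty U›)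
  have htη (i : ℕ) : (t ≫ g i) ≫ towerToBase f i = Spec.map φ ≫ (X 0).fromSpecStalk _ := by
    rw [Category.assoc, comp_towerToBase hcomm, ht]
    rfl
  have htU (i : ℕ) : ⊤ ≤ (t ≫ g i) ⁻¹ᵁ towerToBase f i ⁻¹ᵁ U := by
    rw [← Scheme.Hom.comp_preimage, htη]
    exact top_le_preimage_of_mem φ hη
  refine ⟨L, _, _, ‹_›, fun i => sectionEval (t ≫ g i) _ (htU i), fun i => ?_, fun i => ?_⟩
  · rw [app_comp_sectionEval]
    simp only [htη]
    exact sectionEval_fromSpecStalk φ hη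
  · refine (app_comp_sectionEval (t ≫ g (i + 1)) (f i) _ _).trans ?_
    simp only [Category.assoc, hcomm]

theorem eventually_bijective_app {k : Type u} [Field k] (s : X 0 ⟶ Spec (.of k))
    [LocallyOfFiniteType s] [∀ i, IsIntegral (X i)] [∀ i, IsFinite (f i)] [Surjective (g 0)]
    [LocallyOfFiniteType (g 0)] (hcomm : ∀ i, g (i + 1) ≫ f i = g i) {U : (X 0).Opens}
    (hU : IsAffineOpen U) [Nonempty U] :
    ∀ᶠ i in atTop, Function.Bijective ((f i).app (towerToBase f i ⁻¹ᵁ U)).hom := by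
  let A := Γ(X 0, U)
  let R (i : ℕ) := Γ(X i, towerToBase f i ⁻¹ᵁ U)
  let K := (X 0).functionField
  obtain ⟨L, _, _, _, γ, hγ, hγf⟩ := exists_forall_app_comp_eq hcomm U
  have (i : ℕ) : IsFinite (towerToBase f i) := towerToBase_mem @IsFinite inferInstance i
  have (i : ℕ) : Nontrivial (R i) := (γ i).hom.domain_nontrivial
  have (i : ℕ) : IsDomain (R i) :=
    have := nonempty_of_nontrivial_sections (V := towerToBase f i ⁻¹ᵁ U)
    inferInstance
  algebraize [((Scheme.ΓSpecIso (.of k)).inv ≫ s.appLE ⊤ U le_top).hom]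
  have : Algebra.FiniteType k A := finiteType_sections s hU
  have := functionField_isFractionRing_of_isAffineOpen _ U hU
  let : Algebra A L := ((algebraMap K L).comp (algebraMap A K)).toAlgebra
  have : IsScalarTower A K L := .of_algebraMap_eq' rfl
  let (i : ℕ) : Algebra A (R i) := ((towerToBase f i).app U).hom.toAlgebra
  have (i : ℕ) : Module.Finite A (R i) := (towerToBase f i).finite_app U hU
  exact eventually_bijective_of_finiteType k K
    (fun i => ((f i).app (towerToBase f i ⁻¹ᵁ U)).hom)
    (fun i => { (γ i).hom with commutes' := ConcreteCategory.congr_hom (hγ i) })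
    fun i => ConcreteCategory.congr_hom (hγf i)

theorem eventually_isIso_of_iSup_eq_top [∀ i, IsAffineHom (f i)] {ι : Type*} [Finite ι]
    {U : ι → (X 0).Opens} (hU : ∀ j, IsAffineOpen (U j)) (hcov : ⨆ j, U j = ⊤)
    (h : ∀ j, ∀ᶠ i in atTop,
      Function.Bijective ((f i).app (towerToBase f i ⁻¹ᵁ U j)).hom) :
    ∀ᶠ i in atTop, IsIso (f i) := by
  filter_upwards [eventually_all.mpr h] with i hi
  have : IsAffineHom (towerToBase f i) := towerToBase_mem @IsAffineHom inferInstance i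
  refine IsZariskiLocalAtTarget.of_iSup_eq_top (P := .isomorphisms Scheme.{u})
    (fun j => towerToBase f i ⁻¹ᵁ U j) ?_ fun j => ?_
  · rw [← Scheme.Hom.preimage_iSup, hcov, Scheme.Hom.preimage_top]
  · exact (isIso_morphismRestrict_iff_isIso_app _ ((hU j).preimage _)).mpr
      ((ConcreteCategory.isIso_iff_bijective _).mpr (hi j))

theorem eventually_isIso_of_isFinite {k : Type u} [Field k] (s : X 0 ⟶ Spec (.of k))
    [LocallyOfFiniteType s] [CompactSpace (X 0)] [∀ i, IsIntegral (X i)] [∀ i, IsFinite (f i)]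
    [Surjective (g 0)] [LocallyOfFiniteType (g 0)] (hcomm : ∀ i, g (i + 1) ≫ f i = g i) :
    ∀ᶠ i in atTop, IsIso (f i) := by
  choose U hU hmem _ using fun x : X 0 =>
    exists_isAffineOpen_mem_and_subset (U := ⊤) (Set.mem_univ x)
  have (x : X 0) : Nonempty (U x) := ⟨x, hmem x⟩
  obtain ⟨t, ht⟩ := isCompact_univ.elim_finite_subcover (fun x => (U x : Set (X 0)))
    (fun x => (U x).isOpen) fun x _ => Set.mem_iUnion_of_mem x (hmem x)
  refine eventually_isIso_of_iSup_eq_top (U := fun x : t => U x) (fun x => hU x) ?_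
    fun x => eventually_bijective_app s hcomm (hU x)
  refine eq_top_iff.mpr fun x _ => ?_
  simpa using ht (Set.mem_univ x)

end EventuallyIso

theorem eventually_iso_of_dominated_general {k : Type*} [Field k] {X : ℕ → Scheme}
    [∀ i, IsIntegral (X i)] (s : X 0 ⟶ Spec (CommRingCat.of k)) [LocallyOfFiniteType s]
    [QuasiCompact s] {f : ∀ i, X (i + 1) ⟶ X i} [∀ i, IsProper (f i)] {Y : Scheme}
    {g : ∀ i, Y ⟶ X i} [∀ i, AlgebraicGeometry.Surjective (g i)] [LocallyOfFiniteType (g 0)]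
    [QuasiCompact (g 0)] (hcomm : ∀ i, g (i + 1) ≫ f i = g i) :
    ∃ i₀ : ℕ, ∀ i ≥ i₀, IsIso (f i) := by
  have : IsLocallyNoetherian (X 0) := LocallyOfFiniteType.isLocallyNoetherian s
  have : CompactSpace (X 0) := QuasiCompact.compactSpace_of_compactSpace s
  have : IsNoetherian (X 0) := {}
  obtain ⟨N, hN⟩ := Filter.eventually_atTop.mp (eventually_isFinite hcomm)
  have (i : ℕ) : IsFinite (f (N + i)) := hN _ (Nat.le_add_right N i)
  have : IsProper (towerToBase f N) := towerToBase_mem @IsProper inferInstance N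
  have : CompactSpace (X N) := QuasiCompact.compactSpace_of_compactSpace (towerToBase f N)
  have : LocallyOfFiniteType (g N ≫ towerToBase f N) := comp_towerToBase hcomm N ▸ inferInstance
  have : LocallyOfFiniteType (g N) := locallyOfFiniteType_of_comp _ (towerToBase f N)
  obtain ⟨M, hM⟩ := Filter.eventually_atTop.mp <|
    eventually_isIso_of_isFinite (X := fun i => X (N + i)) (f := fun i => f (N + i))
      (g := fun i => g (N + i)) (towerToBase f N ≫ s) fun i => hcomm (N + i)
  refine ⟨N + M, fun i hi => ?_⟩
  obtain ⟨j, rfl⟩ := Nat.exists_eq_add_of_le (Nat.le_of_add_right_le hi)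
  exact hM j (Nat.le_of_add_le_add_left hi)

/-- Let `X₀ ← X₁ ← X₂ ← ⋯` be a sequence of proper surjective morphisms of varieties over a
field `k` (integral, separated, finite-type `k`-schemes), and suppose a variety `Y` over `k`
surjects compatibly onto every `Xᵢ`. Then `fᵢ : Xᵢ₊₁ → Xᵢ` is an isomorphism for all large
`i`. -/
theorem eventually_iso_of_dominated (k : Type*) [Field k]
    (X : ℕ → Scheme) (sX : ∀ i, X i ⟶ Spec (CommRingCat.of k))
    (hXint : ∀ i, IsIntegral (X i))
    (hXsep : ∀ i, AlgebraicGeometry.IsSeparated (sX i))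
    (hXlft : ∀ i, LocallyOfFiniteType (sX i)) (hXqc : ∀ i, QuasiCompact (sX i))
    (f : ∀ i, X (i + 1) ⟶ X i)
    (hf : ∀ i, f i ≫ sX i = sX (i + 1))
    (hfproper : ∀ i, IsProper (f i))
    (hfsurj : ∀ i, AlgebraicGeometry.Surjective (f i))
    (Y : Scheme) (sY : Y ⟶ Spec (CommRingCat.of k))
    (hYint : IsIntegral Y) (hYsep : AlgebraicGeometry.IsSeparated sY)
    (hYlft : LocallyOfFiniteType sY) (hYqc : QuasiCompact sY)
    (g : ∀ i, Y ⟶ X i)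
    (hg : ∀ i, g i ≫ sX i = sY)
    (hgsurj : ∀ i, AlgebraicGeometry.Surjective (g i))
    (hcomm : ∀ i, g (i + 1) ≫ f i = g i) :
    ∃ i₀ : ℕ, ∀ i ≥ i₀, IsIso (f i) := by
  have : QuasiCompact (g 0 ≫ sX 0) := hg 0 ▸ hYqc
  have : LocallyOfFiniteType (g 0 ≫ sX 0) := hg 0 ▸ hYlft
  have := QuasiCompact.of_comp (g 0) (sX 0)
  have := locallyOfFiniteType_of_comp (g 0) (sX 0)
  exact eventually_iso_of_dominated_general (sX 0) hcomm
end

section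
/- Let A be a commutative ring, B a commutative integral domain which is an A-algebra, and M, N two A-modules. If the torsion-free quotient ((M ⊕ N) ⊗_A B)/T((M ⊕ N) ⊗_A B) is a flat B-module, then the torsion-free quotient (M ⊗_A B)/T(M ⊗_A B) is also a flat B-module. -/
open TensorProduct

/-- The torsion-free quotient `M / T(M)`. Over a ring with zero divisors, an element is torsion
if it is annihilated by a non-zero-divisor. -/
abbrev TorsionFreeQuotient (R M : Type*) [CommRing R] [AddCommGroup M] [Module R M] : Type _ :=
  M ⧸ Submodule.torsion R M

theorem torsion_le_comap_torsion {R M N : Type*} [CommSemiring R] [AddCommMonoid M] [Module R M]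
    [AddCommMonoid N] [Module R N] (f : M →ₗ[R] N) :
    Submodule.torsion R M ≤ (Submodule.torsion R N).comap f :=
  fun _ ⟨a, hax⟩ ↦ ⟨a, by rw [← f.map_smul_of_tower, hax, map_zero]⟩

namespace TorsionFreeQuotient

variable {R M N P : Type*} [CommRing R] [AddCommGroup M] [Module R M] [AddCommGroup N] [Module R N]
  [AddCommGroup P] [Module R P]

/-- The action of the functor `M ↦ M / T(M)` on linear maps. -/
def map (f : M →ₗ[R] N) : TorsionFreeQuotient R M →ₗ[R] TorsionFreeQuotient R N :=
  Submodule.mapQ _ _ f (torsion_le_comap_torsion f)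

theorem map_id : map (LinearMap.id : M →ₗ[R] M) = LinearMap.id :=
  Submodule.mapQ_id _

theorem map_comp (g : N →ₗ[R] P) (f : M →ₗ[R] N) : map (g ∘ₗ f) = map g ∘ₗ map f :=
  Submodule.mapQ_comp _ _ _ f g _ _

theorem flat_of_retract (i : M →ₗ[R] N) (r : N →ₗ[R] M) (h : r ∘ₗ i = LinearMap.id)
    (hN : Module.Flat R (TorsionFreeQuotient R N)) : Module.Flat R (TorsionFreeQuotient R M) :=
  .of_retract (map i) (map r) (by rw [← map_comp, h, map_id])

end TorsionFreeQuotient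

theorem flat_torsionFree_pullback_of_summand_general {A B M P : Type*} [CommSemiring A]
    [CommRing B] [Algebra A B] [AddCommMonoid M] [Module A M] [AddCommMonoid P] [Module A P]
    (i : M →ₗ[A] P) (r : P →ₗ[A] M) (h : r ∘ₗ i = LinearMap.id)
    (hflat : Module.Flat B (TorsionFreeQuotient B (B ⊗[A] P))) :
    Module.Flat B (TorsionFreeQuotient B (B ⊗[A] M)) := by
  have h_baseChange : r.baseChange B ∘ₗ i.baseChange B = LinearMap.id := by
    rw [← LinearMap.baseChange_comp, h, LinearMap.baseChange_id]
  exact TorsionFreeQuotient.flat_of_retract _ _ h_baseChange hflat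

/-- For a commutative ring `A`, an integral domain `B` which is an `A`-algebra, and
`A`-modules `M`, `N`: if the torsion-free base change of `M ⊕ N` to `B` is flat over `B`,
then so is the torsion-free base change of `M`. -/
theorem flat_torsionFree_pullback_of_summand (A B : Type*) [CommRing A] [CommRing B]
    [IsDomain B] [Algebra A B] (M N : Type*) [AddCommGroup M] [Module A M] [AddCommGroup N]
    [Module A N]
    (hflat : Module.Flat B ((B ⊗[A] (M × N)) ⧸ Submodule.torsion B (B ⊗[A] (M × N)))) :
    Module.Flat B ((B ⊗[A] M) ⧸ Submodule.torsion B (B ⊗[A] M)) :=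
  flat_torsionFree_pullback_of_summand_general (.inl A M N) (.fst A M N)
    (LinearMap.fst_comp_inl A M N) hflat
end

section
/- Let k be a commutative ring, p a prime, n ≥ 2, and let g be a polynomial in the multivariate polynomial ring k[x₀, …, x_n] which involves only the variables x₀, …, x_{n−2} (i.e., g lies in the image of k[x₀, …, x_{n−2}]). Set f = g + x_{n−1}·x_n. Then the coefficient of the monomial x_{n−1}^{p−1} · x_n^{p−1} in f^{p−1} is equal to 1. -/
/-!
Write `(g + M) ^ (N + 1) = (g + M) ^ N * g + (g + M) ^ N * M` with `M = X i * X j` and `i ≠ j`. If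
`g` does not involve `X i`, the first summand has degree at most `N` in `X i`, so the coefficient of
`M ^ (N + 1)` comes from the second, where it is the coefficient of `M ^ N` in `(g + M) ^ N`. The
same induction works for every monomial `M` whose degree in some variable exceeds that of `g`.
-/

section

open MvPolynomial

variable {σ R : Type*} [CommSemiring R] {i : σ} {g : MvPolynomial σ R}

theorem degreeOf_monomial_le (i : σ) (m : σ →₀ ℕ) (c : R) :
    degreeOf i (monomial m c) ≤ m i :=
  degreeOf_le_iff.mpr fun d hd ↦ by rw [Finset.mem_singleton.mp (support_monomial_subset hd)]

theorem coeff_nsmul_add_monomial_pow {m : σ →₀ ℕ} (hg : degreeOf i g < m i) (c : R) (N : ℕ) :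
    coeff (N • m) ((g + monomial m c) ^ N) = c ^ N := by
  have degreeOf_add_le : degreeOf i (g + monomial m c) ≤ m i :=
    (degreeOf_add_le i g _).trans (max_le hg.le (degreeOf_monomial_le i m c))
  induction N with
  | zero => rw [zero_nsmul, pow_zero, pow_zero, coeff_zero_one]
  | succ N ih =>
    have degreeOf_lt : degreeOf i ((g + monomial m c) ^ N * g) < ((N + 1) • m) i :=
      calc degreeOf i ((g + monomial m c) ^ N * g)
        _ ≤ degreeOf i ((g + monomial m c) ^ N) + degreeOf i g := degreeOf_mul_le i _ _
        _ ≤ N * degreeOf i (g + monomial m c) + degreeOf i g := by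
          gcongr
          exact degreeOf_pow_le i _ N
        _ < N * m i + m i := add_lt_add_of_le_of_lt (Nat.mul_le_mul_left N degreeOf_add_le) hg
        _ = ((N + 1) • m) i := by rw [Finsupp.smul_apply, smul_eq_mul, Nat.succ_mul]
    have coeff_eq_zero : coeff ((N + 1) • m) ((g + monomial m c) ^ N * g) = 0 :=
      notMem_support_iff.mp (notMem_support_of_degreeOf_lt i degreeOf_lt)
    rw [pow_succ, mul_add, coeff_add, coeff_eq_zero, zero_add, succ_nsmul, coeff_mul_monomial, ih,
      pow_succ]

theorem coeff_pow_hypersurface_general (j : σ) (hi : i ∉ g.vars) (N : ℕ) :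
    coeff (Finsupp.single i N + Finsupp.single j N) ((g + X i * X j) ^ N) = 1 := by
  have degreeOf_lt : degreeOf i g < (Finsupp.single i 1 + Finsupp.single j 1 : σ →₀ ℕ) i := by
    rw [not_ne_iff.mp (mem_vars_iff_degreeOf_ne_zero.not.mp hi)]
    simp
  simpa [X, monomial_mul] using coeff_nsmul_add_monomial_pow degreeOf_lt (1 : R) N

end

/-- Let `k` be a commutative ring, `p` a prime, `n ≥ 2`, and `g ∈ k[x₀,…,xₙ]` a polynomial
involving only the variables `x₀, …, x_{n-2}`. Then the coefficient of the monomial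
`x_{n-1}^(p-1) * xₙ^(p-1)` in `(g + x_{n-1} * xₙ)^(p-1)` equals `1`. -/
theorem coeff_pow_hypersurface (k : Type*) [CommRing k] (p n : ℕ) (hp : p.Prime) (hn : 2 ≤ n)
    (g : MvPolynomial (Fin (n + 1)) k) (hg : ∀ i ∈ g.vars, (i : ℕ) + 2 ≤ n) :
    MvPolynomial.coeff
      (Finsupp.single (⟨n - 1, by omega⟩ : Fin (n + 1)) (p - 1) +
        Finsupp.single (⟨n, by omega⟩ : Fin (n + 1)) (p - 1))
      ((g + MvPolynomial.X ⟨n - 1, by omega⟩ * MvPolynomial.X ⟨n, by omega⟩) ^ (p - 1)) = 1 :=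
  coeff_pow_hypersurface_general _ (fun h ↦ by have := hg _ h; grind) (p - 1)
end

section
/- Let A be the additive submonoid of ℚ generated by 8, 9, 10, 11 (so A = {8a+9b+10c+11d : a,b,c,d ∈ ℕ}). For e ∈ {1,2}, define B_e := {m ∈ ℚ : 2^e·m ∈ A and there exists m' ∈ ℚ with 2^e·m' ∈ A, m − m' ∈ ℤ, and m' < m}, and C_e := {c ∈ ℚ : there exist m, m' ∈ ℚ with 2^e·m ∈ A, 2^e·m' ∈ A, m' ∉ B_e, c = m − m', m − m' ∈ ℤ, and m' < m}. Then 1 ∈ C_1 and 1 ∉ C_2. -/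
/-- The additive submonoid of `ℚ` generated by `8, 9, 10, 11`. -/
def A8911 : AddSubmonoid ℚ := AddSubmonoid.closure {8, 9, 10, 11}

/-- `B e = {m ∈ (1/2^e)A | ∃ m' ∈ (1/2^e)A, m - m' ∈ ℤ, m' < m}`. -/
def B8911 (e : ℕ) : Set ℚ :=
  {m : ℚ | (2 ^ e : ℚ) * m ∈ A8911 ∧
    ∃ m' : ℚ, (2 ^ e : ℚ) * m' ∈ A8911 ∧ (∃ z : ℤ, m - m' = (z : ℚ)) ∧ m' < m}

/-- `C e = {m - m' | m ∈ (1/2^e)A, m' ∈ (1/2^e)A \ B e, m - m' ∈ ℤ, m' < m}`. -/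
def C8911 (e : ℕ) : Set ℚ :=
  {c : ℚ | ∃ m m' : ℚ, (2 ^ e : ℚ) * m ∈ A8911 ∧ (2 ^ e : ℚ) * m' ∈ A8911 ∧
    m' ∉ B8911 e ∧ c = m - m' ∧ (∃ z : ℤ, m - m' = (z : ℚ)) ∧ m' < m}

/-! Write `S` for the numerical semigroup generated by `8, 9, 10, 11`, which is the union of the
intervals `[8k, 11k]`. After scaling by `2 ^ e`, the elements of `(1/2^e)A` outside `B e` are the
least elements of `S` in their residue classes modulo `2 ^ e`, and `1 ∈ C e` says that `n + 2 ^ e`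
lies in `S` for one of these `n`. Modulo `2` one can take `n = 9`. Modulo `4` every class is already
met by `8, 9, 10, 11`, so `n ≤ 11`; but then either `n = 0` or `12 ≤ n + 4 ≤ 15`, and `S` contains
neither `4` nor any element strictly between `11` and `16`. -/

theorem mem_closure_Icc_iff {a b n : ℕ} :
    n ∈ AddSubmonoid.closure (Set.Icc a b) ↔ ∃ k, k * a ≤ n ∧ n ≤ k * b := by
  constructor
  · intro hn
    induction hn using AddSubmonoid.closure_induction with
    | mem x hx => exact ⟨1, by simpa using hx⟩
    | zero => exact ⟨0, by simp⟩
    | add x y _ _ hx hy =>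
      obtain ⟨k, hkx, hxk⟩ := hx
      obtain ⟨l, hly, hyl⟩ := hy
      exact ⟨k + l, by linarith, by linarith⟩
  · rintro ⟨k, hkn, hnk⟩
    induction k generalizing n with
    | zero =>
      obtain rfl : n = 0 := by simpa using hnk
      exact zero_mem _
    | succ k ih =>
      have hab : a ≤ b := Nat.le_of_mul_le_mul_left (hkn.trans hnk) k.succ_pos
      have hkab : k * a ≤ k * b := Nat.mul_le_mul_left k hab
      rw [Nat.succ_mul] at hkn hnk
      -- Split off the smallest generator that leaves a remainder at most `k * b`.
      obtain ⟨r, hr, hrn, hle, hge⟩ :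
          ∃ r ∈ Set.Icc a b, r ≤ n ∧ k * a ≤ n - r ∧ n - r ≤ k * b :=
        ⟨max a (n - k * b), ⟨by omega, by omega⟩, by omega, by omega, by omega⟩
      rw [← Nat.sub_add_cancel hrn]
      exact add_mem (ih hle hge) (AddSubmonoid.subset_closure hr)

theorem exists_intCast_eq_div_sub_div_iff {K : Type*} [Field K] [CharZero K] {d m n : ℕ}
    (hd : d ≠ 0) : (∃ z : ℤ, (n / d - m / d : K) = z) ↔ m ≡ n [MOD d] := by
  have hd' : (d : K) ≠ 0 := Nat.cast_ne_zero.mpr hd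
  rw [Nat.modEq_iff_dvd]
  refine exists_congr fun z => ?_
  rw [← sub_div, div_eq_iff hd', mul_comm]
  norm_cast

/-- The elements of `S` that are least in their residue class modulo `d`. For a numerical semigroup
`S` and `d ∈ S` this is the classical Apéry set; here `d` need not belong to `S`. -/
def aperySet (S : Set ℕ) (d : ℕ) : Set ℕ :=
  {n | IsLeast {m ∈ S | m ≡ n [MOD d]} n}

theorem mem_aperySet_iff {S : Set ℕ} {d n : ℕ} :
    n ∈ aperySet S d ↔ n ∈ S ∧ ∀ m ∈ S, m ≡ n [MOD d] → n ≤ m := by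
  simp [aperySet, IsLeast, mem_lowerBounds, Nat.ModEq.refl]

theorem lt_of_mem_aperySet {S : Set ℕ} {a d n : ℕ} (hd : 0 < d) (hS : Set.Ico a (a + d) ⊆ S)
    (hn : n ∈ aperySet S d) : n < a + d := by
  by_contra! hle
  have hlt : a + (n - a) % d < a + d := Nat.add_lt_add_left (Nat.mod_lt _ hd) a
  have hmod : a + (n - a) % d ≡ n [MOD d] := by
    simpa [Nat.add_sub_cancel' (le_of_add_le_left hle)] using (Nat.mod_modEq (n - a) d).add_left a
  exact absurd ((mem_aperySet_iff.mp hn).2 _ (hS ⟨Nat.le_add_right _ _, hlt⟩) hmod) (by omega)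

/-- The numerical semigroup generated by `8, 9, 10, 11`, as a submonoid of `ℕ`: `A8911` is its image
in `ℚ`, and congruences are stated in it. -/
def semigroup8911 : AddSubmonoid ℕ := AddSubmonoid.closure (Set.Icc 8 11)

theorem mem_semigroup8911_iff {n : ℕ} :
    n ∈ semigroup8911 ↔ ∃ k, k * 8 ≤ n ∧ n ≤ k * 11 :=
  mem_closure_Icc_iff

theorem map_semigroup8911 : semigroup8911.map (Nat.castAddMonoidHom ℚ) = A8911 := by
  have hIcc : Set.Icc 8 11 = ({8, 9, 10, 11} : Set ℕ) := by
    ext n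
    simp only [Set.mem_Icc, Set.mem_insert_iff, Set.mem_singleton_iff]
    omega
  simp [semigroup8911, A8911, AddMonoidHom.map_mclosure, hIcc, Set.image_insert_eq]

theorem two_pow_mul_mem_A8911_iff {e : ℕ} {x : ℚ} :
    2 ^ e * x ∈ A8911 ↔ ∃ n ∈ semigroup8911, (n / (2 ^ e : ℕ) : ℚ) = x := by
  rw [← map_semigroup8911, AddSubmonoid.mem_map]
  refine exists_congr fun n => and_congr_right fun _ => ?_
  rw [div_eq_iff (by positivity), mul_comm x]
  simp

theorem div_two_pow_mem_B8911_iff {e n : ℕ} (hn : n ∈ semigroup8911) :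
    (n / (2 ^ e : ℕ) : ℚ) ∈ B8911 e ↔ ∃ m ∈ semigroup8911, m ≡ n [MOD 2 ^ e] ∧ m < n := by
  have hpos : (0 : ℚ) < (2 ^ e : ℕ) := by positivity
  refine (and_iff_right (two_pow_mul_mem_A8911_iff.mpr ⟨n, hn, rfl⟩)).trans ?_
  simp only [two_pow_mul_mem_A8911_iff, exists_exists_and_eq_and,
    exists_intCast_eq_div_sub_div_iff (pow_ne_zero e two_ne_zero),
    div_lt_div_iff_of_pos_right hpos, Nat.cast_lt]

theorem div_two_pow_notMem_B8911_iff {e n : ℕ} (hn : n ∈ semigroup8911) :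
    (n / (2 ^ e : ℕ) : ℚ) ∉ B8911 e ↔ n ∈ aperySet semigroup8911 (2 ^ e) := by
  rw [div_two_pow_mem_B8911_iff hn, mem_aperySet_iff]
  simp [hn]

theorem natCast_mem_C8911_iff {e j : ℕ} :
    (j : ℚ) ∈ C8911 e ↔
      0 < j ∧ ∃ n ∈ aperySet semigroup8911 (2 ^ e), n + j * 2 ^ e ∈ semigroup8911 := by
  have hpos : (0 : ℚ) < (2 ^ e : ℕ) := by positivity
  constructor
  · rintro ⟨x, y, hx, hy, hyB, hj, -, hyx⟩
    obtain ⟨m, hm, rfl⟩ := two_pow_mul_mem_A8911_iff.mp hx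
    obtain ⟨n, hn, rfl⟩ := two_pow_mul_mem_A8911_iff.mp hy
    have hmn : m = n + j * 2 ^ e := by
      rw [← sub_div, eq_div_iff hpos.ne', eq_sub_iff_add_eq'] at hj
      exact_mod_cast hj.symm
    refine ⟨?_, n, (div_two_pow_notMem_B8911_iff hn).mp hyB, hmn ▸ hm⟩
    exact_mod_cast hj ▸ sub_pos.mpr hyx
  · rintro ⟨hj, n, hn, hm⟩
    have hnS : n ∈ semigroup8911 := (mem_aperySet_iff.mp hn).1
    have hsub : ((n + j * 2 ^ e : ℕ) / (2 ^ e : ℕ) - n / (2 ^ e : ℕ) : ℚ) = j := by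
      rw [← sub_div, div_eq_iff hpos.ne']
      push_cast
      ring
    refine ⟨_, _, two_pow_mul_mem_A8911_iff.mpr ⟨_, hm, rfl⟩,
      two_pow_mul_mem_A8911_iff.mpr ⟨n, hnS, rfl⟩, (div_two_pow_notMem_B8911_iff hnS).mpr hn,
      hsub.symm, ⟨j, by exact_mod_cast hsub⟩, ?_⟩
    rw [← sub_pos, hsub]
    exact_mod_cast hj

theorem one_mem_C8911_iff {e : ℕ} :
    1 ∈ C8911 e ↔ ∃ n ∈ aperySet semigroup8911 (2 ^ e), n + 2 ^ e ∈ semigroup8911 := by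
  simpa using natCast_mem_C8911_iff (e := e) (j := 1)

theorem nine_mem_aperySet_two : 9 ∈ aperySet semigroup8911 2 := by
  refine mem_aperySet_iff.mpr ⟨mem_semigroup8911_iff.mpr ⟨1, by norm_num⟩, fun m hm hodd => ?_⟩
  obtain ⟨k, hkm, hmk⟩ := mem_semigroup8911_iff.mp hm
  rw [Nat.ModEq] at hodd
  omega

theorem lt_twelve_of_mem_aperySet_four {n : ℕ} (hn : n ∈ aperySet semigroup8911 4) : n < 12 := by
  refine lt_of_mem_aperySet (a := 8) four_pos (fun m hm => ?_) hn
  exact AddSubmonoid.subset_closure ⟨hm.1, Nat.le_of_lt_succ hm.2⟩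

theorem add_four_notMem_semigroup8911 {n : ℕ} (hn : n ∈ semigroup8911) (hlt : n < 12) :
    n + 4 ∉ semigroup8911 := by
  intro hn4
  obtain ⟨k, hkn, hnk⟩ := mem_semigroup8911_iff.mp hn
  obtain ⟨l, hln, hnl⟩ := mem_semigroup8911_iff.mp hn4
  omega

/-- For the monomial curve `Spec k[t⁸,t⁹,t¹⁰,t¹¹]` in characteristic `2`: `1 ∈ C 1`
(the first F-blowup is smooth) but `1 ∉ C 2` (the second F-blowup is not), so the second
F-blowup does not dominate the first. -/
theorem one_mem_C_one_not_mem_C_two : (1 : ℚ) ∈ C8911 1 ∧ (1 : ℚ) ∉ C8911 2 := by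
  constructor
  · have h11 : 9 + 2 ∈ semigroup8911 := mem_semigroup8911_iff.mpr ⟨1, by norm_num⟩
    exact one_mem_C8911_iff.mpr ⟨9, nine_mem_aperySet_two, h11⟩
  · intro h
    obtain ⟨n, hn, hn4⟩ := one_mem_C8911_iff.mp h
    exact add_four_notMem_semigroup8911 (mem_aperySet_iff.mp hn).1
      (lt_twelve_of_mem_aperySet_four hn) hn4
end

section
/- Let A be the additive submonoid of ℚ generated by 2 and 3 (so A = {2a+3b : a,b ∈ ℕ} = {0,2,3,4,5,…}). For e ∈ {1,2}, define B_e := {m ∈ ℚ : 2^e·m ∈ A and there exists m' ∈ ℚ with 2^e·m' ∈ A, m − m' ∈ ℤ, and m' < m}. Then 3/2 ∈ B_2 and 2·(3/2) ∈ A, but 3/2 ∉ B_1; in particular B_1 ≠ B_2 ∩ {m ∈ ℚ : 2·m ∈ A}. -/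
/-- The additive submonoid of `ℚ` generated by `2` and `3`. -/
def A23 : AddSubmonoid ℚ := AddSubmonoid.closure {2, 3}

/-- `B e = {m ∈ (1/2^e)A | ∃ m' ∈ (1/2^e)A, m - m' ∈ ℤ, m' < m}`. -/
def B23 (e : ℕ) : Set ℚ :=
  {m : ℚ | (2 ^ e : ℚ) * m ∈ A23 ∧
    ∃ m' : ℚ, (2 ^ e : ℚ) * m' ∈ A23 ∧ (∃ z : ℤ, m - m' = (z : ℚ)) ∧ m' < m}

/-! For `e ≠ 0` the submonoid `A` contains `2 ^ e`, so a witness `m' < m` congruent to `m`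
modulo `ℤ` can always be moved up to `m - 1`. Hence `B e = 1 + (1 / 2 ^ e) A`, and `1 + 1 / 2 ^ e`
lies in `B (e + 1)` because `2 ∈ A`, but not in `B e` because `1 ∉ A`. -/

theorem natCast_mem_A23_iff {n : ℕ} : (n : ℚ) ∈ A23 ↔ n ≠ 1 := by
  rw [A23, AddSubmonoid.mem_closure_pair]
  simp only [nsmul_eq_mul]
  norm_cast
  constructor
  · rintro ⟨a, b, h⟩
    omega
  · intro hn
    exact ⟨(n - 3 * (n % 2)) / 2, n % 2, by omega⟩

theorem two_pow_mem_A23 {e : ℕ} (he : e ≠ 0) : (2 : ℚ) ^ e ∈ A23 := by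
  exact_mod_cast natCast_mem_A23_iff.mpr (Nat.one_lt_two_pow he).ne'

theorem mem_B23_iff {e : ℕ} (he : e ≠ 0) {m : ℚ} :
    m ∈ B23 e ↔ (2 : ℚ) ^ e * (m - 1) ∈ A23 := by
  have hpow : (2 : ℚ) ^ e ∈ A23 := two_pow_mem_A23 he
  constructor
  · rintro ⟨-, m', hm', ⟨z, hz⟩, hlt⟩
    have hz_pos : 0 < z := by
      rw [← sub_pos, hz] at hlt
      exact_mod_cast hlt
    obtain ⟨k, rfl⟩ : ∃ k : ℕ, z = k + 1 := ⟨(z - 1).toNat, by omega⟩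
    have hshift : (2 : ℚ) ^ e * (m - 1) = 2 ^ e * m' + k • 2 ^ e := by
      rw [sub_eq_iff_eq_add.mp hz, nsmul_eq_mul]
      push_cast
      ring
    rw [hshift]
    exact add_mem hm' (nsmul_mem hpow k)
  · intro hm
    have hadd : (2 : ℚ) ^ e * m = 2 ^ e * (m - 1) + 2 ^ e := by ring
    exact ⟨hadd ▸ add_mem hm hpow, m - 1, hm, ⟨1, by simp⟩, sub_one_lt m⟩

theorem condition_star_fails_general {e : ℕ} (he : e ≠ 0) :
    (1 + 1 / 2 ^ e : ℚ) ∈ B23 (e + 1) ∧ (2 : ℚ) ^ e * (1 + 1 / 2 ^ e) ∈ A23 ∧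
      (1 + 1 / 2 ^ e : ℚ) ∉ B23 e ∧ B23 e ≠ B23 (e + 1) ∩ {m : ℚ | (2 : ℚ) ^ e * m ∈ A23} := by
  have hsucc : (1 + 1 / 2 ^ e : ℚ) ∈ B23 (e + 1) := by
    have htwo : (2 : ℚ) ^ (e + 1) * (1 + 1 / 2 ^ e - 1) = 2 ^ 1 := by field_simp; ring
    rw [mem_B23_iff e.succ_ne_zero, htwo]
    exact two_pow_mem_A23 one_ne_zero
  have hA : (2 : ℚ) ^ e * (1 + 1 / 2 ^ e) ∈ A23 := by
    have hcast : (2 : ℚ) ^ e * (1 + 1 / 2 ^ e) = (2 ^ e + 1 : ℕ) := by field_simp; norm_cast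
    rw [hcast, natCast_mem_A23_iff]
    simp
  have hB : (1 + 1 / 2 ^ e : ℚ) ∉ B23 e := by
    have hone : (2 : ℚ) ^ e * (1 + 1 / 2 ^ e - 1) = (1 : ℕ) := by field_simp; norm_num
    rw [mem_B23_iff he, hone, natCast_mem_A23_iff]
    simp
  exact ⟨hsucc, hA, hB, fun h => hB (h ▸ ⟨hsucc, hA⟩)⟩

/-- For the cuspidal curve `Spec k[t²,t³]` in characteristic `2`: `3/2 ∈ B 2`, `2·(3/2) ∈ A`,
but `3/2 ∉ B 1`; in particular `B 1 ≠ B 2 ∩ (1/2)A`, so Condition (*) fails even though the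
F-blowup sequence is monotone. -/
theorem condition_star_fails :
    (3 / 2 : ℚ) ∈ B23 2 ∧ (2 : ℚ) * (3 / 2) ∈ A23 ∧ (3 / 2 : ℚ) ∉ B23 1 ∧
      B23 1 ≠ B23 2 ∩ {m : ℚ | (2 : ℚ) * m ∈ A23} := by
  have hwitness : (3 / 2 : ℚ) = 1 + 1 / 2 ^ 1 := by norm_num
  simpa only [hwitness, pow_one] using condition_star_fails_general one_ne_zero
end
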